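/- Let G be a 3-pyramid free 2-tree on at least 3 vertices. Then the edge set E' = { uv ∈ E(G) : |N_G(u) ∩ N_G(v)| = 1 } is the edge set of a Hamiltonian cycle of G. -/

import Mathlib

/-!
Three common neighbours `a, b, c` of an edge `uv` of a 2-tree are pairwise non-adjacent, since a
2-tree has no `K₄` (`IsTwoTree.not_k4`), so together with `u, v` they induce a 3-pyramid. Hence a
3-pyramid free 2-tree is `Thin`: every edge lies in at most two triangles. Conversely every edge of
a 2-tree on at least three vertices lies in at least one triangle. So an edge lies in exactly one
triangle, and is in `E'`, or in exactly two, and is not.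

The theorem is then proved for thin 2-trees by induction on the construction. If `z` is attached
to the edge `uv` and the result `G'` is thin, then `uv` had at most one common neighbour before.
If `G` is the single edge `uv`, then `G'` is a triangle. Otherwise `uv` belongs to the Hamiltonian
cycle of `G`, which is `uv` followed by a Hamiltonian path from `v` to `u`
(`exists_path_of_mem_edges`). Replacing `uv` by `u z v` yields the Hamiltonian cycle of `G'`: the
edges `uz` and `zv` lie in exactly one triangle, `uv` now lies in two, and no other edge changes.
In both cases the cycle is `u z v` followed by a path from `v` to `u` (`exists_cycle_of_path`).
-/

open SimpleGraph

/-- `IsTwoTree V G` : the simple graph `G` on `ℕ` with support (vertex set) `V` is a 2-tree,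
defined inductively: a single edge is a 2-tree, and adding a new vertex `z` adjacent to
exactly the two endpoints `u, v` of an existing edge yields a 2-tree. -/
inductive IsTwoTree : Finset ℕ → SimpleGraph ℕ → Prop
  | base (u v : ℕ) (huv : u ≠ v) :
      IsTwoTree {u, v} (fromEdgeSet {s(u, v)})
  | grow {V : Finset ℕ} {G : SimpleGraph ℕ} (hG : IsTwoTree V G)
      (u v z : ℕ) (huv : G.Adj u v) (hz : z ∉ V) (hzu : z ≠ u) (hzv : z ≠ v) :
      IsTwoTree (insert z V) (G ⊔ fromEdgeSet {s(z, u), s(z, v)})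


/-- `H` (with vertex set `W`) is an `n`-pyramid: a 2-tree on `n + 2` vertices having an
edge `uv` such that `u` and `v` have exactly `n` common neighbors. -/
def IsNPyramid (n : ℕ) (W : Finset ℕ) (H : SimpleGraph ℕ) : Prop :=
  IsTwoTree W H ∧ W.card = n + 2 ∧
    ∃ u v, H.Adj u v ∧ (H.neighborSet u ∩ H.neighborSet v).ncard = n

/-- `G` (with vertex set `V`) contains an `n`-pyramid as an induced subgraph: there is a
set of vertices `W ⊆ V` on which `G` induces an `n`-pyramid. -/
def ContainsNPyramid (V : Finset ℕ) (G : SimpleGraph ℕ) (n : ℕ) : Prop :=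
  ∃ (W : Finset ℕ) (H : SimpleGraph ℕ), W ⊆ V ∧ IsNPyramid n W H ∧
    ∀ a b, a ∈ W → b ∈ W → (G.Adj a b ↔ H.Adj a b)

/-- `p` is a Hamiltonian path of the graph `G` with vertex set `V`: a path whose support
is exactly `V`. -/
def IsHamPathOn (V : Finset ℕ) {G : SimpleGraph ℕ} {s t : ℕ} (p : G.Walk s t) : Prop :=
  p.IsPath ∧ ∀ x, x ∈ p.support ↔ x ∈ V

/-- `p` is a Hamiltonian cycle of the graph `G` with vertex set `V`: a cycle whose support
is exactly `V`. -/
def IsHamCycleOn (V : Finset ℕ) {G : SimpleGraph ℕ} {a : ℕ} (p : G.Walk a a) : Prop :=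
  p.IsCycle ∧ ∀ x, x ∈ p.support ↔ x ∈ V

/-! ### Edges and triangles -/

/-- The edge `xy` of `G` lies in exactly one triangle. -/
def OneTriangle (G : SimpleGraph ℕ) (x y : ℕ) : Prop :=
  G.Adj x y ∧ ∃ w, ∀ t, (G.Adj x t ∧ G.Adj y t) ↔ t = w

/-- Every edge of `G` lies in at most two triangles. -/
def Thin (G : SimpleGraph ℕ) : Prop :=
  ∀ u v a b c, G.Adj u v → G.Adj u a → G.Adj v a → G.Adj u b → G.Adj v b → G.Adj u c → G.Adj v c →
    a = b ∨ a = c ∨ b = c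

lemma oneTriangle_iff (G : SimpleGraph ℕ) (x y : ℕ) :
    OneTriangle G x y ↔ (G.Adj x y ∧ (G.neighborSet x ∩ G.neighborSet y).ncard = 1) := by
  simp only [OneTriangle, Set.ncard_eq_one, Set.ext_iff, Set.mem_inter_iff, mem_neighborSet,
    Set.mem_singleton_iff]

lemma edge_adj_iff (u v x y : ℕ) (huv : u ≠ v) :
    (fromEdgeSet {s(u, v)}).Adj x y ↔ (x = u ∧ y = v) ∨ (x = v ∧ y = u) := by
  simp only [fromEdgeSet_adj, Set.mem_singleton_iff, Sym2.eq_iff]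
  grind

lemma grow_adj_iff (G : SimpleGraph ℕ) (u v z x y : ℕ) (hzu : z ≠ u) (hzv : z ≠ v) :
    (G ⊔ fromEdgeSet {s(z, u), s(z, v)}).Adj x y ↔
      G.Adj x y ∨ (x = z ∧ (y = u ∨ y = v)) ∨ (y = z ∧ (x = u ∨ x = v)) := by
  simp only [sup_adj, fromEdgeSet_adj, Set.mem_insert_iff, Set.mem_singleton_iff, Sym2.eq_iff]
  grind

lemma IsTwoTree.mem_of_adj {V : Finset ℕ} {G : SimpleGraph ℕ} (hG : IsTwoTree V G) :
    ∀ x y, G.Adj x y → x ∈ V ∧ y ∈ V := by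
  induction hG with
  | base u v huv => intro x y h; rw [edge_adj_iff _ _ _ _ huv] at h; grind
  | grow hG u v z huv hz hzu hzv ih =>
    intro x y h
    rw [grow_adj_iff _ _ _ _ _ _ hzu hzv] at h
    have := ih u v huv
    have := ih x y
    grind

/-! ### Pyramids and triangles on an edge -/

/-- A 2-tree contains no `K₄`. -/
lemma IsTwoTree.not_k4 {V : Finset ℕ} {G : SimpleGraph ℕ} (hG : IsTwoTree V G) :
    ∀ a b c d, G.Adj a b → G.Adj a c → G.Adj a d → G.Adj b c → G.Adj b d → G.Adj c d → False := by
  induction hG with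
  | base u v huv => intro a b c d; simp only [edge_adj_iff _ _ _ _ huv]; grind
  | @grow V G hG u v z huv hz hzu hzv ih =>
    intro a b c d
    have hm := hG.mem_of_adj
    have hz1 : ∀ x, ¬ G.Adj x z := fun x h => hz (hm _ _ h).2
    have hz2 : ∀ x, ¬ G.Adj z x := fun x h => hz (hm _ _ h).1
    have hir : ∀ x, ¬ G.Adj x x := fun x => G.loopless.irrefl x
    have := ih a b c d
    simp only [grow_adj_iff _ _ _ _ _ _ hzu hzv]
    -- If one of the four vertices is `z`, the other three would all be among `u, v`.
    by_cases ha : a = z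
    · subst ha; grind
    by_cases hb : b = z
    · subst hb; grind
    by_cases hc : c = z
    · subst hc; grind
    by_cases hd : d = z
    · subst hd; grind
    grind

lemma IsTwoTree.thin {V : Finset ℕ} {G : SimpleGraph ℕ} (hG : IsTwoTree V G)
    (h3 : ¬ ContainsNPyramid V G 3) : Thin G := by
  intro u v a b c huv hua hva hub hvb huc hvc
  by_contra hne
  push Not at hne
  obtain ⟨hab, hac, hbc⟩ := hne
  have nab : ¬ G.Adj a b := fun h => hG.not_k4 u v a b huv hua hub hva hvb h
  have nac : ¬ G.Adj a c := fun h => hG.not_k4 u v a c huv hua huc hva hvc h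
  have nbc : ¬ G.Adj b c := fun h => hG.not_k4 u v b c huv hub huc hvb hvc h
  have hau := hua.ne'
  have hav := hva.ne'
  have hbu := hub.ne'
  have hbv := hvb.ne'
  have hcu := huc.ne'
  have hcv := hvc.ne'
  have hne := huv.ne
  have T0 := IsTwoTree.base u v hne
  have T1 := T0.grow u v a ((edge_adj_iff _ _ _ _ hne).2 (by simp)) (by simp [hau, hav]) hau hav
  have e1 := fun x y => grow_adj_iff (fromEdgeSet {s(u, v)}) u v a x y hau hav
  have T2 := T1.grow u v b ((e1 _ _).2 (Or.inl ((edge_adj_iff _ _ _ _ hne).2 (by simp))))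
    (by simp [hbu, hbv, hab.symm]) hbu hbv
  have e2 := fun x y => grow_adj_iff (fromEdgeSet {s(u, v)} ⊔ fromEdgeSet {s(a, u), s(a, v)})
    u v b x y hbu hbv
  have T3 := T2.grow u v c ((e2 _ _).2 (Or.inl ((e1 _ _).2
    (Or.inl ((edge_adj_iff _ _ _ _ hne).2 (by simp))))))
    (by simp [hcu, hcv, hac.symm, hbc.symm]) hcu hcv
  have e3 := fun x y => grow_adj_iff (fromEdgeSet {s(u, v)} ⊔ fromEdgeSet {s(a, u), s(a, v)}
    ⊔ fromEdgeSet {s(b, u), s(b, v)}) u v c x y hcu hcv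
  simp only [e1, e2, edge_adj_iff _ _ _ _ hne] at e3
  refine h3 ⟨_, _, ?_, ⟨T3, ?_, u, v, ?_, ?_⟩, ?_⟩
  · have := hG.mem_of_adj u a hua
    have := hG.mem_of_adj v b hvb
    have := hG.mem_of_adj v c hvc
    intro x hx
    simp only [Finset.mem_insert, Finset.mem_singleton] at hx
    grind
  · rw [Finset.card_insert_of_notMem, Finset.card_insert_of_notMem, Finset.card_insert_of_notMem,
      Finset.card_pair hne] <;> simp <;> grind
  · rw [e3]; simp
  · rw [Set.ncard_eq_three]
    refine ⟨a, b, c, hab, hac, hbc, ?_⟩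
    ext x
    simp only [Set.mem_inter_iff, mem_neighborSet, e3, Set.mem_insert_iff, Set.mem_singleton_iff]
    grind
  · have hs := fun x y => G.adj_comm x y
    have hir : ∀ x, ¬ G.Adj x x := fun x => G.loopless.irrefl x
    intro x y hx hy
    rw [e3]
    simp only [Finset.mem_insert, Finset.mem_singleton] at hx hy
    rcases hx with rfl | rfl | rfl | rfl | rfl <;>
      rcases hy with rfl | rfl | rfl | rfl | rfl <;> grind

/-! ### Cycles through an edge -/

/-- A cycle through the edge `uv` consists of `uv` and a path from `v` to `u`. -/
lemma exists_path_of_mem_edges {G : SimpleGraph ℕ} {a u v : ℕ} (p : G.Walk a a) (hp : p.IsCycle)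
    (he : s(u, v) ∈ p.edges) :
    ∃ q : G.Walk v u, q.IsPath ∧ (∀ x, x ∈ q.support ↔ x ∈ p.support) ∧
      ∀ e, e ∈ q.edges ↔ e ∈ p.edges ∧ e ≠ s(u, v) := by
  have hu : u ∈ p.support := Walk.fst_mem_support_of_mem_edges _ he
  -- Start the cycle at `u`, in the direction of `v`.
  obtain ⟨c, hc, hcs, hce, hsnd⟩ : ∃ c : G.Walk u u, c.IsCycle ∧
      (∀ x, x ∈ c.support ↔ x ∈ p.support) ∧ (∀ e, e ∈ c.edges ↔ e ∈ p.edges) ∧ c.snd = v := by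
    have hr : (p.rotate u hu).IsCycle := (Walk.isCycle_rotate hu).2 hp
    have hre : ∀ e, e ∈ (p.rotate u hu).edges ↔ e ∈ p.edges :=
      fun e => (p.rotate_edges u hu).mem_iff
    have hrs : ∀ x, x ∈ (p.rotate u hu).support ↔ x ∈ p.support := fun x => by simp
    have hv : v ∈ (p.rotate u hu).toSubgraph.neighborSet u :=
      Walk.adj_toSubgraph_iff_mem_edges.2 ((hre _).2 he)
    rw [hr.neighborSet_toSubgraph_endpoint] at hv
    rcases hv with hv | hv
    · exact ⟨_, hr, hrs, hre, hv.symm⟩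
    · exact ⟨_, hr.reverse, by simp, by simpa using hre, by
        rw [Walk.snd_reverse]; exact hv.symm⟩
  cases c with
  | nil => exact absurd hc Walk.not_isCycle_nil
  | @cons _ w _ h q =>
    have hw : w = v := by simpa using hsnd
    subst hw
    rw [Walk.cons_isCycle_iff] at hc
    refine ⟨q, hc.1, fun x => ?_, fun e => ?_⟩
    · rw [← hcs]
      have := q.end_mem_support
      simp only [Walk.support_cons, List.mem_cons]
      grind
    · rw [← hce]
      simp only [Walk.edges_cons, List.mem_cons]
      have := hc.2
      grind

/-- If `z` is attached to the edge `uv` of `G`, a Hamiltonian path of `G` from `v` to `u` through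
exactly the edges of `G` that lie in one triangle of the new graph closes up via `u z v`. -/
lemma exists_cycle_of_path {V : Finset ℕ} {G : SimpleGraph ℕ} (hG : IsTwoTree V G) {u v z : ℕ}
    (huv : G.Adj u v) (hz : z ∉ V) (hzu : z ≠ u) (hzv : z ≠ v) (q : G.Walk v u) (hq : q.IsPath)
    (hqs : ∀ x, x ∈ q.support ↔ x ∈ V)
    (hqe : ∀ x y, s(x, y) ∈ q.edges ↔
      G.Adj x y ∧ OneTriangle (G ⊔ fromEdgeSet {s(z, u), s(z, v)}) x y) :
    ∃ (a : ℕ) (p : (G ⊔ fromEdgeSet {s(z, u), s(z, v)}).Walk a a), IsHamCycleOn (insert z V) p ∧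
      ∀ x y, s(x, y) ∈ p.edges ↔ OneTriangle (G ⊔ fromEdgeSet {s(z, u), s(z, v)}) x y := by
  have hadj := fun x y => grow_adj_iff G u v z x y hzu hzv
  have hm := hG.mem_of_adj
  have huV := (hm _ _ huv).1
  have hir : ∀ x, ¬ G.Adj x x := fun x => G.loopless.irrefl x
  have hz1 : ∀ x, ¬ G.Adj x z := fun x h => hz (hm _ _ h).2
  have hz2 : ∀ x, ¬ G.Adj z x := fun x h => hz (hm _ _ h).1
  have hs := fun x y => G.adj_comm x y
  have htu : OneTriangle (G ⊔ fromEdgeSet {s(z, u), s(z, v)}) u z := by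
    refine ⟨(hadj _ _).2 (by simp), v, fun t => ?_⟩
    simp only [hadj]
    grind
  have htv : OneTriangle (G ⊔ fromEdgeSet {s(z, u), s(z, v)}) z v := by
    refine ⟨(hadj _ _).2 (by simp), u, fun t => ?_⟩
    simp only [hadj]
    grind
  have hsymm : ∀ x y, OneTriangle (G ⊔ fromEdgeSet {s(z, u), s(z, v)}) x y →
      OneTriangle (G ⊔ fromEdgeSet {s(z, u), s(z, v)}) y x := by
    rintro x y ⟨h, w, hw⟩
    exact ⟨h.symm, w, fun t => by rw [and_comm]; exact hw t⟩
  have hle : G ≤ G ⊔ fromEdgeSet {s(z, u), s(z, v)} := le_sup_left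
  have hzq : z ∉ q.support := fun h => hz ((hqs _).1 h)
  have hzqe : s(u, z) ∉ q.edges := fun h => hzq (Walk.snd_mem_support_of_mem_edges _ h)
  refine ⟨u, .cons htu.1 (.cons htv.1 (q.mapLe hle)), ⟨?_, fun x => ?_⟩, fun x y => ?_⟩
  · rw [Walk.cons_isCycle_iff, Walk.cons_isPath_iff, Walk.isPath_mapLe,
      Walk.support_mapLe_eq_support, Walk.edges_cons, Walk.edges_mapLe_eq_edges]
    refine ⟨⟨hq, hzq⟩, ?_⟩
    have := huv.ne
    simp only [List.mem_cons, hzqe, or_false, Sym2.eq_iff]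
    grind
  · simp only [Walk.support_cons, Walk.support_mapLe_eq_support, List.mem_cons, hqs,
      Finset.mem_insert]
    grind
  · simp only [Walk.edges_cons, Walk.edges_mapLe_eq_edges, List.mem_cons, hqe, Sym2.eq_iff]
    constructor
    · rintro ((⟨rfl, rfl⟩ | ⟨rfl, rfl⟩) | (⟨rfl, rfl⟩ | ⟨rfl, rfl⟩) | h)
      exacts [htu, hsymm _ _ htu, htv, hsymm _ _ htv, h.2]
    · intro h
      have := (hadj _ _).1 h.1
      grind

/-! ### Induction on the construction -/

/-- A thin 2-tree is a single edge, or each of its edges lies in a triangle and the edges lying in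
exactly one triangle form a Hamiltonian cycle. -/
lemma IsTwoTree.edge_or_cycle_of_thin {V : Finset ℕ} {G : SimpleGraph ℕ} (hG : IsTwoTree V G)
    (hT : Thin G) :
    (∃ u v, u ≠ v ∧ V = {u, v} ∧ G = fromEdgeSet {s(u, v)}) ∨
      ((∀ x y, G.Adj x y → ∃ t, G.Adj x t ∧ G.Adj y t) ∧
        ∃ (a : ℕ) (p : G.Walk a a), IsHamCycleOn V p ∧
          ∀ x y, s(x, y) ∈ p.edges ↔ OneTriangle G x y) := by
  induction hG with
  | base u v huv => exact Or.inl ⟨u, v, huv, rfl, rfl⟩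
  | @grow V G hG u v z huv hz hzu hzv ih =>
    right
    have hadj := fun x y => grow_adj_iff G u v z x y hzu hzv
    have hm := hG.mem_of_adj
    have hir : ∀ x, ¬ G.Adj x x := fun x => G.loopless.irrefl x
    have hz1 : ∀ x, ¬ G.Adj x z := fun x h => hz (hm _ _ h).2
    have hz2 : ∀ x, ¬ G.Adj z x := fun x h => hz (hm _ _ h).1
    have hs := fun x y => G.adj_comm x y
    have hTG : Thin G := by
      intro u v a b c h1 h2 h3 h4 h5 h6 h7
      exact hT u v a b c (Or.inl h1) (Or.inl h2) (Or.inl h3) (Or.inl h4) (Or.inl h5) (Or.inl h6)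
        (Or.inl h7)
    rcases ih hTG with ⟨u', v', hne, rfl, rfl⟩ | ⟨htri, a, p, ⟨hp, hps⟩, hpe⟩
    · have hadj0 := fun x y => edge_adj_iff u' v' x y hne
      simp only [hadj0] at hadj huv
      constructor
      · intro x y
        simp only [hadj]
        intro h
        -- The third vertex of the triangle is the one different from `x` and `y`.
        have : ∃ t, (t = z ∨ t = u ∨ t = v) ∧ t ≠ x ∧ t ≠ y := by
          by_contra! hcon
          have h1 := hcon z (by simp)
          have h2 := hcon u (by simp)
          have h3 := hcon v (by simp)
          grind
        obtain ⟨t, ht⟩ := this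
        refine ⟨t, ?_⟩
        grind
      · have hvu : v ≠ u := by grind
        have hA : (fromEdgeSet {s(u', v')}).Adj v u := by rw [hadj0]; grind
        refine exists_cycle_of_path hG hA.symm hz hzu hzv (.cons hA .nil) ?_ ?_ ?_
        · simpa using hvu
        · intro x
          simp only [Walk.support_cons, Walk.support_nil, List.mem_cons, List.not_mem_nil,
            Finset.mem_insert, Finset.mem_singleton]
          grind
        · intro x y
          simp only [OneTriangle, hadj, hadj0, Walk.edges_cons, Walk.edges_nil, List.mem_cons,
            List.not_mem_nil, Sym2.eq_iff, or_false]
          constructor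
          · intro h
            refine ⟨by grind, by grind, z, fun t => ?_⟩
            grind
          · intro h
            grind
    · constructor
      · intro x y h
        rw [hadj] at h
        simp only [hadj]
        rcases h with h | ⟨rfl, rfl | rfl⟩ | ⟨rfl, rfl | rfl⟩
        · obtain ⟨t, ht⟩ := htri x y h
          exact ⟨t, Or.inl ht.1, Or.inl ht.2⟩
        · exact ⟨v, by grind⟩
        · exact ⟨u, by grind⟩
        · exact ⟨v, by grind⟩
        · exact ⟨u, by grind⟩
      · obtain ⟨w, hw⟩ := htri u v huv
        have hwz : w ≠ z := by rintro rfl; exact hz1 _ hw.1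
        -- A second common neighbour of `u, v` in `G` would be a third one next to `w` and `z`.
        have hone : OneTriangle G u v := by
          refine ⟨huv, w, fun t => ⟨fun ht => ?_, fun ht => ht ▸ hw⟩⟩
          have h := hT u v t w z
          simp only [hadj] at h
          have : t ≠ z := by rintro rfl; exact hz1 _ ht.1
          grind
        obtain ⟨q, hq, hqs, hqe⟩ := exists_path_of_mem_edges p hp ((hpe u v).2 hone)
        refine exists_cycle_of_path hG huv hz hzu hzv q hq (fun x => (hqs x).trans (hps x)) ?_
        intro x y
        rw [hqe, hpe]
        by_cases hxy : s(x, y) = s(u, v)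
        · simp only [hxy, ne_eq, not_true_eq_false, and_false, false_iff, not_and]
          rintro - ⟨-, w', hw'⟩
          simp only [hadj] at hw'
          have h1 := hw' w
          have h2 := hw' z
          rw [Sym2.eq_iff] at hxy
          grind
        · simp only [OneTriangle, hadj, ne_eq, hxy, not_false_eq_true, and_true]
          rw [Sym2.eq_iff] at hxy
          have key : G.Adj x y → ∀ t, ((G.Adj x t ∨ x = z ∧ (t = u ∨ t = v) ∨
              t = z ∧ (x = u ∨ x = v)) ∧ (G.Adj y t ∨ y = z ∧ (t = u ∨ t = v) ∨
              t = z ∧ (y = u ∨ y = v))) ↔ (G.Adj x t ∧ G.Adj y t) := by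
            intro h t
            have : x ≠ y := h.ne
            have : x ≠ z := by rintro rfl; exact hz2 _ h
            have : y ≠ z := by rintro rfl; exact hz1 _ h
            grind
          constructor
          · rintro ⟨h, w', hw'⟩
            exact ⟨h, Or.inl h, w', fun t => (key h t).trans (hw' t)⟩
          · rintro ⟨h, -, w', hw'⟩
            exact ⟨h, w', fun t => (key h t).symm.trans (hw' t)⟩

/-- In a 3-pyramid free 2-tree on at least 3 vertices, the edge set
`E' = { uv ∈ E(G) : |N_G(u) ∩ N_G(v)| = 1 }` is the edge set of a Hamiltonian cycle. -/
theorem unique_hamiltonian_cycle_edge_set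
    (V : Finset ℕ) (G : SimpleGraph ℕ) (hG : IsTwoTree V G) (hcard : 3 ≤ V.card)
    (h3 : ¬ ContainsNPyramid V G 3) :
    ∃ (a : ℕ) (p : G.Walk a a), IsHamCycleOn V p ∧
      ∀ x y, s(x, y) ∈ p.edges ↔
        (G.Adj x y ∧ (G.neighborSet x ∩ G.neighborSet y).ncard = 1) := by
  rcases hG.edge_or_cycle_of_thin (hG.thin h3) with ⟨u, v, hne, rfl, -⟩ | ⟨-, a, p, hp, hpe⟩
  · rw [Finset.card_pair hne] at hcard
    omega
  · exact ⟨a, p, hp, fun x y => (hpe x y).trans (oneTriangle_iff G x y)⟩
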